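/- Let α, α' : Fin 2 → ℂ be orthonormal, let (u₀, u₁) and (w₀, w₁) be orthonormal bases of ℂ², let s, t be nonzero real numbers with s² + t² = 1, and set Φ = s • (u₀ ⊗ w₀) + t • (u₁ ⊗ w₁), Φ' = u₀ ⊗ w₁, and χ = p • (u₀ ⊗ w₁) + q • (u₁ ⊗ w₀) where p, q are nonzero complex numbers. Let c, d be nonzero real numbers with c² + d² = 1 and set Ψ = c • (α ⊗ Φ) + d • (α' ⊗ Φ'). Then for all complex numbers x, y not both zero and all nonzero complex numbers a, b, the state a • Ψ + b • ((x • α + y • α') ⊗ χ) is not completely product. -/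

import Mathlib

/-- Tensor product of two single-qubit vectors, as a two-qubit coefficient matrix. -/
def tq (x y : Fin 2 → ℂ) : Fin 2 → Fin 2 → ℂ := fun j k => x j * y k

/-- Tensor product of a single-qubit vector with a two-qubit state, giving a
three-qubit coefficient tensor. -/
def tqq (α : Fin 2 → ℂ) (w : Fin 2 → Fin 2 → ℂ) : Fin 2 → Fin 2 → Fin 2 → ℂ :=
  fun i j k => α i * w j k

/-- A two-qubit state is a product state if its coefficient matrix factorizes. -/
def ProdState (w : Fin 2 → Fin 2 → ℂ) : Prop :=
  ∃ f g : Fin 2 → ℂ, ∀ j k, w j k = f j * g k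

/-- A two-qubit state is entangled if it is nonzero and not a product state. -/
def Entangled2 (w : Fin 2 → Fin 2 → ℂ) : Prop := w ≠ 0 ∧ ¬ ProdState w

/-- A three-qubit state is completely product if its coefficient tensor factorizes. -/
def CompProd3 (v : Fin 2 → Fin 2 → Fin 2 → ℂ) : Prop :=
  ∃ f g h : Fin 2 → ℂ, ∀ i j k, v i j k = f i * g j * h k

/-- Hermitian inner product on single-qubit vectors. -/
noncomputable def ip1 (u v : Fin 2 → ℂ) : ℂ := ∑ i, (starRingEnd ℂ) (u i) * v i

/-- Hermitian inner product on two-qubit states. -/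
noncomputable def ip2 (u v : Fin 2 → Fin 2 → ℂ) : ℂ := ∑ j, ∑ k, (starRingEnd ℂ) (u j k) * v j k

/-- Hermitian inner product on three-qubit states. -/
noncomputable def ip3 (u v : Fin 2 → Fin 2 → Fin 2 → ℂ) : ℂ :=
  ∑ i, ∑ j, ∑ k, (starRingEnd ℂ) (u i j k) * v i j k

/-!
Pair the state with functionals dual to `α, α'`, to `u₀, u₁` and to `w₀, w₁`. Write `v₀` and `v₁`
for the two-qubit states obtained by pairing only the first factor, with the functionals dual to `α`
and `α'`. In a completely product state these two slices are proportional. The superposed part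
`χ` has no `u₀ ⊗ w₀` or `u₁ ⊗ w₁` component, so `v₀` keeps the nonzero diagonal entries of `Φ`,
whereas `v₁` has zero diagonal. Hence `v₁ = 0`; its `u₁ ⊗ w₀` entry then forces the contribution of
`χ` to `v₁` to vanish, and the contribution of `Φ'` is left over.
-/

open Module
open scoped Matrix

theorem linearIndependent_pair_of_star_dotProduct_eq_zero {n K : Type*} [Fintype n] [Field K]
    [PartialOrder K] [StarRing K] [StarOrderedRing K] {x y : n → K}
    (hx : x ≠ 0) (hy : y ≠ 0) (hxy : star x ⬝ᵥ y = 0) : LinearIndependent K ![x, y] := by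
  refine (LinearIndependent.pair_iff' hx).2 ?_
  rintro r rfl
  have hr : r = 0 := by simpa [dotProduct_smul, hx] using hxy
  exact hy (by rw [hr, zero_smul])

theorem ne_zero_of_ip1_self_eq_one {x : Fin 2 → ℂ} (hx : ip1 x x = 1) : x ≠ 0 := by
  rintro rfl
  simp [ip1] at hx

open scoped ComplexOrder in
theorem linearIndependent_pair_of_ip1 {x y : Fin 2 → ℂ}
    (hx : ip1 x x = 1) (hy : ip1 y y = 1) (hxy : ip1 x y = 0) : LinearIndependent ℂ ![x, y] :=
  linearIndependent_pair_of_star_dotProduct_eq_zero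
    (ne_zero_of_ip1_self_eq_one hx) (ne_zero_of_ip1_self_eq_one hy) hxy

theorem exists_dual_family_of_linearIndependent {ι K V : Type*} [DecidableEq ι] [Field K]
    [AddCommGroup V] [Module K V] {v : ι → V} (hv : LinearIndependent K v) :
    ∃ ε : ι → Dual K V, ∀ i j, ε i (v j) = if i = j then 1 else 0 := by
  obtain ⟨coord, hcoord⟩ := LinearMap.exists_extend hv.repr
  refine ⟨fun i => Finsupp.lapply i ∘ₗ coord, fun i j => ?_⟩
  have hvj : coord (v j) = Finsupp.single j 1 :=
    (LinearMap.congr_fun hcoord ⟨v j, Submodule.subset_span ⟨j, rfl⟩⟩).trans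
      (hv.repr_eq_single j _ rfl)
  simp [hvj, Finsupp.single_apply, eq_comm]

section Outer

variable {ι κ μ K M : Type*}

/-- The tensor product `x ⊗ m` of a coordinate vector `x` with an element `m` of a module `M`, as
the `M`-valued array of its coefficients. Iterating it with `M` again a space of arrays gives
tensors of any order; on qubits it specializes to both `tq` and `tqq`. -/
def outer [SMul K M] (x : ι → K) (m : M) : ι → M := fun i => x i • m

/-- A tensor of order three is a product tensor if it has the form `f ⊗ g ⊗ h`; on qubits this is
`CompProd3`. -/
def IsProductTensor [Mul K] (v : ι → κ → μ → K) : Prop :=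
  ∃ (f : ι → K) (g : κ → K) (h : μ → K), v = outer f (outer g h)

theorem isProductTensor_iff [Semigroup K] {v : ι → κ → μ → K} :
    IsProductTensor v ↔
      ∃ (f : ι → K) (g : κ → K) (h : μ → K), ∀ i j k, v i j k = f i * g j * h k := by
  simp only [IsProductTensor, outer, funext_iff, Pi.smul_apply, smul_eq_mul, mul_assoc]

variable [CommSemiring K] [AddCommMonoid M] [Module K M]

/-- The tensor product `A ⊗ L` of two linear functionals, acting on the arrays `ι → M`. -/
def outerDual (A : Dual K (ι → K)) (L : Dual K M) : Dual K (ι → M) := A ∘ₗ L.compLeft ι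

@[simp]
theorem outerDual_outer (A : Dual K (ι → K)) (L : Dual K M) (x : ι → K) (m : M) :
    outerDual A L (outer x m) = A x * L m := by
  have hLx : L.compLeft ι (outer x m) = L m • x := by
    ext i
    simp [outer, mul_comm]
  rw [outerDual, LinearMap.comp_apply, hLx, map_smul, smul_eq_mul, mul_comm]

theorem IsProductTensor.outerDual_eq_zero [NoZeroDivisors K] {v : ι → κ → μ → K}
    (hv : IsProductTensor v) {A A' : Dual K (ι → K)} {L : Dual K (κ → μ → K)}
    (hA : outerDual A L v ≠ 0) (hA' : outerDual A' L v = 0) (L' : Dual K (κ → μ → K)) :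
    outerDual A' L' v = 0 := by
  obtain ⟨f, g, h, rfl⟩ := hv
  rw [outerDual_outer] at hA hA' ⊢
  have hA'f : A' f = 0 := (mul_eq_zero.1 hA').resolve_right (right_ne_zero_of_mul hA)
  rw [hA'f, zero_mul]

end Outer

theorem superposition_with_biorthogonal_biseparable_not_completely_product_general
    {ι κ μ K : Type*} [Field K] {α α' : ι → K} {u₀ u₁ : κ → K} {w₀ w₁ : μ → K}
    (hα : LinearIndependent K ![α, α']) (hu : LinearIndependent K ![u₀, u₁])
    (hw : LinearIndependent K ![w₀, w₁])
    {s t p q a c d : K} (hst : s ≠ 0 ∨ t ≠ 0) (hq : q ≠ 0) (hc : c ≠ 0) (hd : d ≠ 0) (ha : a ≠ 0)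
    (b x y : K) :
    ¬ IsProductTensor (a • (c • outer α (s • outer u₀ w₀ + t • outer u₁ w₁)
          + d • outer α' (outer u₀ w₁))
        + b • outer (x • α + y • α') (p • outer u₀ w₁ + q • outer u₁ w₀)) := by
  intro hv
  obtain ⟨A, hA⟩ := exists_dual_family_of_linearIndependent hα
  obtain ⟨B, hB⟩ := exists_dual_family_of_linearIndependent hu
  obtain ⟨C, hC⟩ := exists_dual_family_of_linearIndependent hw
  simp only [Fin.forall_fin_two, Matrix.cons_val_zero, Matrix.cons_val_one] at hA hB hC
  set v := a • (c • outer α (s • outer u₀ w₀ + t • outer u₁ w₁) + d • outer α' (outer u₀ w₁))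
    + b • outer (x • α + y • α') (p • outer u₀ w₁ + q • outer u₁ w₀) with hv_def
  let entry (i j k : Fin 2) : K := outerDual (A i) (outerDual (B j) (C k)) v
  have h000 : entry 0 0 0 = a * (c * s) := by simp [entry, hv_def, hA, hB, hC]
  have h011 : entry 0 1 1 = a * (c * t) := by simp [entry, hv_def, hA, hB, hC]
  have h100 : entry 1 0 0 = 0 := by simp [entry, hv_def, hA, hB, hC]
  have h111 : entry 1 1 1 = 0 := by simp [entry, hv_def, hA, hB, hC]
  have h101 : entry 1 0 1 = a * d + b * (y * p) := by simp [entry, hv_def, hA, hB, hC]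
  have h110 : entry 1 1 0 = b * (y * q) := by simp [entry, hv_def, hA, hB, hC]
  have slice_eq_zero (j k : Fin 2) : entry 1 j k = 0 := by
    rcases hst with hs | ht
    · exact hv.outerDual_eq_zero (h000.trans_ne (by simp [ha, hc, hs])) h100 _
    · exact hv.outerDual_eq_zero (h011.trans_ne (by simp [ha, hc, ht])) h111 _
  have hby : b * y = 0 := by simpa [hq, mul_assoc] using h110.symm.trans (slice_eq_zero 1 0)
  have had : a * d = 0 := by
    simpa [← mul_assoc, hby] using h101.symm.trans (slice_eq_zero 0 1)
  exact mul_ne_zero ha hd had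

/-- Proposition 5: with `Φ = s • u₀⊗w₀ + t • u₁⊗w₁`, `Φ' = u₀ ⊗ w₁`,
`χ = p • u₀⊗w₁ + q • u₁⊗w₀` bi-orthogonal to `Φ`, and
`Ψ = c • α ⊗ Φ + d • α' ⊗ Φ'`, any nontrivial superposition of `Ψ` with the
bi-separable state `(x • α + y • α') ⊗ χ` is never completely product. -/
theorem superposition_with_biorthogonal_biseparable_not_completely_product
    (α α' u₀ u₁ w₀ w₁ : Fin 2 → ℂ)
    (hαn : ip1 α α = 1) (hα'n : ip1 α' α' = 1) (hαα' : ip1 α α' = 0)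
    (hu₀ : ip1 u₀ u₀ = 1) (hu₁ : ip1 u₁ u₁ = 1) (hu : ip1 u₀ u₁ = 0)
    (hw₀ : ip1 w₀ w₀ = 1) (hw₁ : ip1 w₁ w₁ = 1) (hw : ip1 w₀ w₁ = 0)
    (s t : ℝ) (hs : s ≠ 0) (ht : t ≠ 0) (hst : s ^ 2 + t ^ 2 = 1)
    (p q : ℂ) (hp : p ≠ 0) (hq : q ≠ 0)
    (c d : ℝ) (hc : c ≠ 0) (hd : d ≠ 0) (hcd : c ^ 2 + d ^ 2 = 1) :
    ∀ x y : ℂ, ¬ (x = 0 ∧ y = 0) → ∀ a b : ℂ, a ≠ 0 → b ≠ 0 →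
      ¬ CompProd3 (a • ((c : ℂ) • tqq α ((s : ℂ) • tq u₀ w₀ + (t : ℂ) • tq u₁ w₁)
          + (d : ℂ) • tqq α' (tq u₀ w₁))
        + b • tqq (x • α + y • α') (p • tq u₀ w₁ + q • tq u₁ w₀)) := by
  intro x y _ a b ha _ hprod
  exact superposition_with_biorthogonal_biseparable_not_completely_product_general
    (linearIndependent_pair_of_ip1 hαn hα'n hαα') (linearIndependent_pair_of_ip1 hu₀ hu₁ hu)
    (linearIndependent_pair_of_ip1 hw₀ hw₁ hw) (.inl (Complex.ofReal_ne_zero.2 hs)) hq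
    (Complex.ofReal_ne_zero.2 hc) (Complex.ofReal_ne_zero.2 hd) ha b x y
    (isProductTensor_iff.2 hprod)
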